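/- The fundamental endomorphism inverts the horizontal derivative (equation (2.17)): Let A be a fanning frame in V with fundamental endomorphism F(t) and horizontal projection P_h(t) = (1/2)(id_V + Ḟ(t)). Then for every smooth curve a : ℝ → V with a(t) ∈ ℓ(t) for all t, and every τ ∈ ℝ: F(τ)(P_h(τ)·ȧ(τ)) = a(τ). Consequently the horizontal derivative H(τ) : ℓ(τ) → h(τ), defined by H(τ)(a(τ)) = P_h(τ)ȧ(τ) for any such section a, is a well-defined linear isomorphism whose inverse is the restriction of F(τ) to h(τ). -/

import Mathlib

/-!
Write `ℓ = span A`. The two defining relations of `F` give `F ∘ F = 0` and `ker F = ℓ`.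
Differentiating `F a = 0` for a section `a` of `ℓ` yields `Ḟ a + F ȧ = 0`; for the members of the
frame this says `Ḟ = -id` on `ℓ`, and then for arbitrary sections `F ȧ = a`. Differentiating
`F ∘ F = 0` yields `F Ḟ ȧ = -Ḟ F ȧ = -Ḟ a = a`, so `F` sends both halves of
`ȧ + Ḟ ȧ = 2 P_h ȧ` to `a`. If two sections agree at `τ`, the difference of their velocities lies
in `ker F = ℓ`, where `P_h` vanishes.
-/

open Filter Topology Submodule

section LinearAlgebra

variable {R M ι : Type*} [Semiring R] [AddCommMonoid M] [Module R M]

theorem exists_eq_add_linearCombination_of_span_sumElim_eq_top {v w : ι → M}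
    (hspan : span R (Set.range (Sum.elim v w)) = ⊤) (x : M) :
    ∃ u ∈ span R (Set.range v), ∃ c : ι →₀ R, x = u + Finsupp.linearCombination R w c := by
  have hx : x ∈ span R (Set.range v) ⊔ span R (Set.range w) := by
    rw [← span_union, ← Set.Sum.elim_range, hspan]
    exact mem_top
  obtain ⟨u, hu, y, hy, rfl⟩ := mem_sup.1 hx
  obtain ⟨c, rfl⟩ := Finsupp.mem_span_range_iff_exists_finsupp.1 hy
  exact ⟨u, hu, c, rfl⟩

/-- `f` is the fundamental endomorphism of a frame with value `v` and velocity `w` at a given time: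
`f` kills `v` and sends `w` to `v`. The fanning condition on `v` and `w`, which makes `f` unique, is
not part of the definition. -/
structure IsFundamentalEndomorphism (v w : ι → M) (f : M →ₗ[R] M) : Prop where
  apply_frame : ∀ i, f (v i) = 0
  apply_velocity : ∀ i, f (w i) = v i

namespace IsFundamentalEndomorphism

variable {v w : ι → M} {f : M →ₗ[R] M}

theorem span_le_ker (hf : IsFundamentalEndomorphism v w f) :
    span R (Set.range v) ≤ LinearMap.ker f :=
  span_le.2 <| Set.range_subset_iff.2 hf.apply_frame

theorem apply_add_linearCombination (hf : IsFundamentalEndomorphism v w f) {u : M}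
    (hu : u ∈ span R (Set.range v)) (c : ι →₀ R) :
    f (u + Finsupp.linearCombination R w c) = Finsupp.linearCombination R v c := by
  have hu₀ : f u = 0 := hf.span_le_ker hu
  have hfw : f ∘ w = v := funext hf.apply_velocity
  rw [map_add, hu₀, zero_add, Finsupp.apply_linearCombination, hfw]

theorem apply_apply (hf : IsFundamentalEndomorphism v w f)
    (hspan : span R (Set.range (Sum.elim v w)) = ⊤) (x : M) : f (f x) = 0 := by
  obtain ⟨u, hu, c, rfl⟩ :=
    exists_eq_add_linearCombination_of_span_sumElim_eq_top hspan x
  rw [hf.apply_add_linearCombination hu]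
  exact hf.span_le_ker (Finsupp.mem_span_range_iff_exists_finsupp.2 ⟨c, rfl⟩)

theorem ker_eq_span (hf : IsFundamentalEndomorphism v w f)
    (hspan : span R (Set.range (Sum.elim v w)) = ⊤) (hv : LinearIndependent R v) :
    LinearMap.ker f = span R (Set.range v) := by
  refine le_antisymm (fun x hx ↦ ?_) hf.span_le_ker
  obtain ⟨u, hu, c, rfl⟩ :=
    exists_eq_add_linearCombination_of_span_sumElim_eq_top hspan x
  rw [LinearMap.mem_ker, hf.apply_add_linearCombination hu] at hx
  have hc : c = 0 := hv (hx.trans (map_zero _).symm)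
  simpa [hc] using hu

end IsFundamentalEndomorphism

end LinearAlgebra

section Curves

variable {𝕜 V W ι : Type*} [NontriviallyNormedField 𝕜]
  [NormedAddCommGroup V] [NormedSpace 𝕜 V] [NormedAddCommGroup W] [NormedSpace 𝕜 W]

theorem deriv_apply_add_apply_deriv_eq_zero {F : 𝕜 → V →L[𝕜] W} {F' : V →L[𝕜] W} {a : 𝕜 → V}
    {a' : V} {τ : 𝕜} (hF : HasDerivAt F F' τ) (ha : HasDerivAt a a' τ)
    (hFa : ∀ᶠ t in 𝓝 τ, F t (a t) = 0) : F' (a τ) + F τ a' = 0 :=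
  (hF.clm_apply ha).unique ((hasDerivAt_const τ 0).congr_of_eventuallyEq hFa)

theorem deriv_comp_self_add_self_comp_deriv_eq_zero {F : 𝕜 → V →L[𝕜] V} {F' : V →L[𝕜] V}
    {x : V} {τ : 𝕜} (hF : HasDerivAt F F' τ) (hFF : ∀ᶠ t in 𝓝 τ, F t (F t x) = 0) :
    F' (F τ x) + F τ (F' x) = 0 := by
  have hFx : HasDerivAt (fun t ↦ F t x) (F' x) τ := by
    simpa using hF.clm_apply (hasDerivAt_const τ x)
  exact deriv_apply_add_apply_deriv_eq_zero hF hFx hFF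

/-- The horizontal projection `P_h = (1/2)(id + Ḟ)`, as a function of the derivative `F'` of the
fundamental endomorphism at a given time. -/
noncomputable def horizontalProjection (F' : V →L[𝕜] V) : V →L[𝕜] V :=
  (1 / 2 : 𝕜) • (ContinuousLinearMap.id 𝕜 V + F')

theorem horizontalProjection_apply (F' : V →L[𝕜] V) (x : V) :
    horizontalProjection F' x = (1 / 2 : 𝕜) • (x + F' x) :=
  rfl

variable {A A' : 𝕜 → ι → V} {F : 𝕜 → V →L[𝕜] V} {F' : V →L[𝕜] V} {τ : 𝕜}

theorem deriv_fundamentalEndomorphism_apply (hA : ∀ i, HasDerivAt (fun t ↦ A t i) (A' τ i) τ)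
    (hF : ∀ᶠ t in 𝓝 τ, IsFundamentalEndomorphism (A t) (A' t) (F t : V →ₗ[𝕜] V))
    (hF' : HasDerivAt F F' τ) {x : V} (hx : x ∈ span 𝕜 (Set.range (A τ))) : F' x = -x := by
  have hframe (i : ι) : F' (A τ i) = -A τ i := by
    have h := deriv_apply_add_apply_deriv_eq_zero hF' (hA i) (hF.mono fun t ht ↦ ht.apply_frame i)
    have hFA' : F τ (A' τ i) = A τ i := hF.self_of_nhds.apply_velocity i
    rwa [hFA', add_eq_zero_iff_eq_neg] at h
  have hEqOn : Set.EqOn F' (-ContinuousLinearMap.id 𝕜 V) (span 𝕜 (Set.range (A τ))) :=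
    LinearMap.eqOn_span (f := (F' : V →ₗ[𝕜] V)) (g := -LinearMap.id) (Set.forall_mem_range.2 hframe)
  exact hEqOn hx

theorem fundamentalEndomorphism_apply_deriv_section {a : 𝕜 → V} {a' : V}
    (hA : ∀ i, HasDerivAt (fun t ↦ A t i) (A' τ i) τ)
    (hF : ∀ᶠ t in 𝓝 τ, IsFundamentalEndomorphism (A t) (A' t) (F t : V →ₗ[𝕜] V))
    (hF' : HasDerivAt F F' τ) (haA : ∀ᶠ t in 𝓝 τ, a t ∈ span 𝕜 (Set.range (A t)))
    (ha : HasDerivAt a a' τ) : F τ a' = a τ := by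
  have hFa : ∀ᶠ t in 𝓝 τ, F t (a t) = 0 := by
    filter_upwards [hF, haA] with t hFt hat using hFt.span_le_ker hat
  have h := deriv_apply_add_apply_deriv_eq_zero hF' ha hFa
  rw [deriv_fundamentalEndomorphism_apply hA hF hF' haA.self_of_nhds] at h
  exact (neg_add_eq_zero.1 h).symm

theorem fundamentalEndomorphism_apply_horizontalProjection_deriv_section [NeZero (2 : 𝕜)]
    {a : 𝕜 → V} {a' : V} (hA : ∀ i, HasDerivAt (fun t ↦ A t i) (A' τ i) τ)
    (hspan : ∀ᶠ t in 𝓝 τ, span 𝕜 (Set.range (Sum.elim (A t) (A' t))) = ⊤)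
    (hF : ∀ᶠ t in 𝓝 τ, IsFundamentalEndomorphism (A t) (A' t) (F t : V →ₗ[𝕜] V))
    (hF' : HasDerivAt F F' τ) (haA : ∀ᶠ t in 𝓝 τ, a t ∈ span 𝕜 (Set.range (A t)))
    (ha : HasDerivAt a a' τ) : F τ (horizontalProjection F' a') = a τ := by
  have hFF : ∀ᶠ t in 𝓝 τ, F t (F t a') = 0 := by
    filter_upwards [hF, hspan] with t hFt hspant using hFt.apply_apply hspant a'
  have hFa' : F τ a' = a τ := fundamentalEndomorphism_apply_deriv_section hA hF hF' haA ha
  have hFF'a' : F τ (F' a') = a τ := by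
    have h := deriv_comp_self_add_self_comp_deriv_eq_zero hF' hFF
    rw [hFa', deriv_fundamentalEndomorphism_apply hA hF hF' haA.self_of_nhds] at h
    exact (neg_add_eq_zero.1 h).symm
  calc F τ (horizontalProjection F' a') = (1 / 2 : 𝕜) • (a τ + a τ) := by
        rw [horizontalProjection_apply, map_smul, map_add, hFa', hFF'a']
    _ = a τ := by
        rw [← two_smul 𝕜, smul_smul, one_div_mul_cancel two_ne_zero, one_smul]

theorem horizontalProjection_deriv_section_congr {a b : 𝕜 → V} {a' b' : V}
    (hA : ∀ i, HasDerivAt (fun t ↦ A t i) (A' τ i) τ) (hli : LinearIndependent 𝕜 (A τ))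
    (hspan : span 𝕜 (Set.range (Sum.elim (A τ) (A' τ))) = ⊤)
    (hF : ∀ᶠ t in 𝓝 τ, IsFundamentalEndomorphism (A t) (A' t) (F t : V →ₗ[𝕜] V))
    (hF' : HasDerivAt F F' τ) (haA : ∀ᶠ t in 𝓝 τ, a t ∈ span 𝕜 (Set.range (A t)))
    (hbA : ∀ᶠ t in 𝓝 τ, b t ∈ span 𝕜 (Set.range (A t))) (ha : HasDerivAt a a' τ)
    (hb : HasDerivAt b b' τ) (hab : a τ = b τ) :
    horizontalProjection F' a' = horizontalProjection F' b' := by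
  have hker : F τ (a' - b') = 0 := by
    rw [map_sub, fundamentalEndomorphism_apply_deriv_section hA hF hF' haA ha,
      fundamentalEndomorphism_apply_deriv_section hA hF hF' hbA hb, hab, sub_self]
  have hmem : a' - b' ∈ span 𝕜 (Set.range (A τ)) :=
    (hF.self_of_nhds.ker_eq_span hspan hli).le hker
  rw [← sub_eq_zero, ← map_sub, horizontalProjection_apply,
    deriv_fundamentalEndomorphism_apply hA hF hF' hmem, add_neg_cancel, smul_zero]

theorem fundamental_endomorphism_inverts_horizontal_derivative_general [NeZero (2 : 𝕜)]
    (hA : ∀ᶠ t in 𝓝 τ, ∀ i, HasDerivAt (fun s ↦ A s i) (A' t i) t)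
    (hli : LinearIndependent 𝕜 (A τ))
    (hspan : ∀ᶠ t in 𝓝 τ, span 𝕜 (Set.range (Sum.elim (A t) (A' t))) = ⊤)
    (hF : ∀ᶠ t in 𝓝 τ, IsFundamentalEndomorphism (A t) (A' t) (F t : V →ₗ[𝕜] V))
    (hF' : HasDerivAt F F' τ) :
    (∀ (a : 𝕜 → V) (a' : V), (∀ᶠ t in 𝓝 τ, a t ∈ span 𝕜 (Set.range (A t))) →
      HasDerivAt a a' τ → F τ (horizontalProjection F' a') = a τ) ∧
    (∀ (a b : 𝕜 → V) (a' b' : V), (∀ᶠ t in 𝓝 τ, a t ∈ span 𝕜 (Set.range (A t))) →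
      (∀ᶠ t in 𝓝 τ, b t ∈ span 𝕜 (Set.range (A t))) →
      HasDerivAt a a' τ → HasDerivAt b b' τ → a τ = b τ →
      horizontalProjection F' a' = horizontalProjection F' b') :=
  ⟨fun _ _ ↦ fundamentalEndomorphism_apply_horizontalProjection_deriv_section
      hA.self_of_nhds hspan hF hF',
    fun _ _ _ _ ↦ horizontalProjection_deriv_section_congr
      hA.self_of_nhds hli hspan.self_of_nhds hF hF'⟩

end Curves

/-- **The fundamental endomorphism inverts the horizontal derivative (eq. (2.17)).**
For a fanning frame `A` with fundamental endomorphism `F(t)` and horizontal projection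
`P_h(t) = (1/2)(id + Ḟ(t))`: for every smooth section `a(t) ∈ ℓ(t)` and every `τ`,
`F(τ)(P_h(τ) ȧ(τ)) = a(τ)`.  Consequently the horizontal derivative
`H(τ) : ℓ(τ) → h(τ)`, `a(τ) ↦ P_h(τ) ȧ(τ)`, is well defined: two sections agreeing at
`τ` have the same horizontal derivative there. -/
theorem fundamental_endomorphism_inverts_horizontal_derivative
    {V : Type*} [NormedAddCommGroup V] [NormedSpace ℝ V] [FiniteDimensional ℝ V]
    {n : ℕ} (hn : 0 < n) (hdim : Module.finrank ℝ V = 2 * n)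
    (A A' : ℝ → Fin n → V)
    (hA : ∀ i, ContDiff ℝ (⊤ : ℕ∞) (fun t => A t i))
    (hA' : ∀ i t, HasDerivAt (fun s => A s i) (A' t i) t)
    (hfan : ∀ t, LinearIndependent ℝ (Sum.elim (A t) (A' t)) ∧
      Submodule.span ℝ (Set.range (Sum.elim (A t) (A' t))) = ⊤)
    (F F' : ℝ → V →L[ℝ] V)
    (hF0 : ∀ t i, F t (A t i) = 0)
    (hF1 : ∀ t i, F t (A' t i) = A t i)
    (hFd : ∀ t, HasDerivAt F (F' t) t) :
    (∀ (a a' : ℝ → V), ContDiff ℝ (⊤ : ℕ∞) a →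
      (∀ t, a t ∈ Submodule.span ℝ (Set.range (A t))) →
      (∀ t, HasDerivAt a (a' t) t) →
      ∀ τ, F τ ((1/2 : ℝ) • (a' τ + F' τ (a' τ))) = a τ) ∧
    (∀ (a a' b b' : ℝ → V), ContDiff ℝ (⊤ : ℕ∞) a → ContDiff ℝ (⊤ : ℕ∞) b →
      (∀ t, a t ∈ Submodule.span ℝ (Set.range (A t))) →
      (∀ t, b t ∈ Submodule.span ℝ (Set.range (A t))) →
      (∀ t, HasDerivAt a (a' t) t) → (∀ t, HasDerivAt b (b' t) t) →
      ∀ τ, a τ = b τ →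
        (1/2 : ℝ) • (a' τ + F' τ (a' τ)) = (1/2 : ℝ) • (b' τ + F' τ (b' τ))) := by
  have hli (t : ℝ) : LinearIndependent ℝ (A t) := (hfan t).1.comp Sum.inl Sum.inl_injective
  have h (τ : ℝ) := fundamental_endomorphism_inverts_horizontal_derivative_general
    (.of_forall fun t i ↦ hA' i t) (hli τ) (.of_forall fun t ↦ (hfan t).2)
    (.of_forall fun t ↦ ⟨hF0 t, hF1 t⟩) (hFd τ)
  exact ⟨fun a a' _ haA ha τ ↦ (h τ).1 a (a' τ) (.of_forall haA) (ha τ),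
    fun a a' b b' _ _ haA hbA ha hb τ ↦
      (h τ).2 a b (a' τ) (b' τ) (.of_forall haA) (.of_forall hbA) (ha τ) (hb τ)⟩
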